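/- arXiv:0711.1327 — 2 statements merged into one kernel-verified Lean document; each statement's English description precedes it below -/
import Mathlib

section
/- For every integer d ≥ 3, the second boundary coefficient of Theorem 1 decomposes according to the genus-2 test surface of Theorem 2: B₂(d) = 3·N₁(d) + 80·e(d, 2d−5) + 160·a(d−1, 2d−5) + 640·a(d, 2d−5). -/
/-- The factorial of an integer `n`, interpreted as `0! = 1` extended by `n! = (n.toNat)!`
(only ever applied to nonnegative integers). -/
noncomputable def zfact (n : ℤ) : ℚ := (Nat.factorial n.toNat : ℚ)

/-- `1/n!` for an integer `n`, with the convention `1/n! = 0` whenever `n < 0`. -/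
noncomputable def invfact (n : ℤ) : ℚ :=
  if 0 ≤ n then (Nat.factorial n.toNat : ℚ)⁻¹ else 0

/-- The binomial coefficient `binom(n, k)` for integers, equal to `0` when `k > n` or `k < 0`. -/
noncomputable def zbinom (n k : ℤ) : ℚ :=
  if 0 ≤ k ∧ k ≤ n then (Nat.choose n.toNat k.toNat : ℚ) else 0

/-- `a(d, g) = (2d−g−1)·g!/(d!·(g−d+1)!)` from Proposition 2.1. -/
noncomputable def aCount (d g : ℤ) : ℚ :=
  ((2 * d - g - 1 : ℤ) : ℚ) * zfact g * invfact d * invfact (g - d + 1)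

/-- `b(d, g) = (2d−g−1)·(2d−g)·(2d−g+1)·g!/(d!·(g−d)!)` from Proposition 2.1. -/
noncomputable def bCount (d g : ℤ) : ℚ :=
  ((2 * d - g - 1 : ℤ) : ℚ) * ((2 * d - g : ℤ) : ℚ) * ((2 * d - g + 1 : ℤ) : ℚ) *
    zfact g * invfact d * invfact (g - d)

/-- `c(d, g, γ) = (γ²·(2d−g) − γ)·binom(g, d)` from Proposition 2.1. -/
noncomputable def cCount (d g γ : ℤ) : ℚ :=
  (((γ : ℚ) ^ 2 * ((2 * d - g : ℤ) : ℚ) - (γ : ℚ))) * zbinom g d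

/-- `e(d, g) = 8·g!/((d−3)!·(g−d+2)!) − 8·g!/(d!·(g−d−1)!)` from Proposition 2.1. -/
noncomputable def eCount (d g : ℤ) : ℚ :=
  8 * zfact g * invfact (d - 3) * invfact (g - d + 2) -
    8 * zfact g * invfact d * invfact (g - d - 1)

/-- `N(d)`, the number of pencils of degree `d` with two unspecified triple ramification
points on a general curve of genus `2d−4` (Proposition 2.2 (2)). -/
noncomputable def Ncount (d : ℤ) : ℚ :=
  48 * (6 * (d : ℚ) ^ 2 - 28 * (d : ℚ) + 35) * zfact (2 * d - 4) * invfact d * invfact (d - 3)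

/-- `N₁(d)` from Proposition 2.2 (3). -/
noncomputable def N1count (d : ℤ) : ℚ :=
  24 * (12 * (d : ℚ) ^ 3 - 92 * (d : ℚ) ^ 2 + 240 * (d : ℚ) - 215) *
    zfact (2 * d - 4) * invfact d * invfact (d - 2)

/-- `N₂(d)` from Theorem 5.4. -/
noncomputable def N2count (d : ℤ) : ℚ :=
  6 * (40 * (d : ℚ) ^ 2 - 179 * (d : ℚ) + 212) * zfact (2 * d - 4) * invfact d * invfact (d - 3)

/-- `N₃(d)` from Theorem 5.6. -/
noncomputable def N3count (d : ℤ) : ℚ :=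
  84 * ((d : ℚ) - 3) * (2 * (d : ℚ) ^ 2 - 10 * (d : ℚ) + 13) *
    zfact (2 * d - 4) * invfact d * invfact (d - 2)

/-- The overall constant `K(d) = 2·(2d−6)!/(d!·(d−3)!)` of Theorem 1. -/
noncomputable def Kconst (d : ℤ) : ℚ := 2 * zfact (2 * d - 6) * invfact d * invfact (d - 3)

/-- The `λ`-coefficient `A(d) = K(d)·24·(36d⁴−36d³−640d²+1885d−1475)` of Theorem 1. -/
noncomputable def Acoeff (d : ℤ) : ℚ :=
  Kconst d * (24 * (36 * (d : ℚ) ^ 4 - 36 * (d : ℚ) ^ 3 - 640 * (d : ℚ) ^ 2 +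
    1885 * (d : ℚ) - 1475))

/-- The `δ₀`-coefficient `B₀(d) = K(d)·(144d⁴−528d³−298d²+3049d−2940)` of Theorem 1. -/
noncomputable def B0coeff (d : ℤ) : ℚ :=
  Kconst d * (144 * (d : ℚ) ^ 4 - 528 * (d : ℚ) ^ 3 - 298 * (d : ℚ) ^ 2 +
    3049 * (d : ℚ) - 2940)

/-- The `δᵢ`-coefficient `Bᵢ(d) = K(d)·12·i·(2d−3−i)·(36d³−156d²+180d−5)`, `i ≥ 1`,
of Theorem 1. -/
noncomputable def Bcoeff (d i : ℤ) : ℚ :=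
  Kconst d * (12 * (i : ℚ) * (2 * (d : ℚ) - 3 - (i : ℚ)) *
    (36 * (d : ℚ) ^ 3 - 156 * (d : ℚ) ^ 2 + 180 * (d : ℚ) - 5))

theorem invfact_pred_aux (n m : ℤ) (h : m = n - 1) : invfact m = (n : ℚ) * invfact n := by
  subst h
  unfold invfact
  rcases lt_trichotomy n 0 with h | h | h
  · rw [if_neg (by omega), if_neg (by omega), mul_zero]
  · subst h; simp
  · obtain ⟨k, rfl⟩ : ∃ k : ℕ, n = (k : ℤ) + 1 := ⟨(n - 1).toNat, by omega⟩
    rw [if_pos (by omega), if_pos (by omega)]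
    have h1 : ((k : ℤ) + 1 - 1).toNat = k := by omega
    have h2 : ((k : ℤ) + 1).toNat = k + 1 := by omega
    rw [h1, h2, Nat.factorial_succ]
    have h3 : (Nat.factorial k : ℚ) ≠ 0 := by exact_mod_cast Nat.factorial_ne_zero k
    have h4 : (k : ℚ) + 1 ≠ 0 := by positivity
    push_cast
    field_simp

theorem zfact_succ_aux (n m : ℤ) (h0 : 0 < n) (h : m = n - 1) :
    zfact n = (n : ℚ) * zfact m := by
  obtain ⟨k, rfl⟩ : ∃ k : ℕ, n = (k : ℤ) + 1 := ⟨(n - 1).toNat, by omega⟩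
  unfold zfact
  have h1 : m.toNat = k := by omega
  have h2 : ((k : ℤ) + 1).toNat = k + 1 := by omega
  rw [h1, h2, Nat.factorial_succ]
  push_cast
  ring

/-- the decomposition of the second boundary coefficient of Theorem 1 according
to the genus-2 test surface of Theorem 2 (proof of Theorem 3.3), for every integer `d ≥ 3`:
`B₂(d) = 3·N₁(d) + 80·e(d, 2d−5) + 160·a(d−1, 2d−5) + 640·a(d, 2d−5)`. -/
theorem genus_two_decomposition (d : ℤ) (hd : 3 ≤ d) :
    Bcoeff d 2 = 3 * N1count d + 80 * eCount d (2 * d - 5) + 160 * aCount (d - 1) (2 * d - 5) +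
      640 * aCount d (2 * d - 5) := by
  have f4 := zfact_succ_aux (2 * d - 4) (2 * d - 5) (by omega) (by ring)
  have f5 := zfact_succ_aux (2 * d - 5) (2 * d - 6) (by omega) (by ring)
  have i1 := invfact_pred_aux d (d - 1) rfl
  have i2 := invfact_pred_aux (d - 1) (d - 2) (by ring)
  have i3 := invfact_pred_aux (d - 2) (d - 3) (by ring)
  have i4 := invfact_pred_aux (d - 3) (d - 4) (by ring)
  have i5 := invfact_pred_aux (d - 4) (d - 5) (by ring)
  have i6 := invfact_pred_aux (d - 5) (d - 6) (by ring)
  unfold Bcoeff N1count eCount aCount Kconst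
  rw [show 2 * d - 5 - d + 2 = d - 3 by ring, show 2 * d - 5 - d - 1 = d - 6 by ring,
    show 2 * d - 5 - (d - 1) + 1 = d - 3 by ring, show 2 * d - 5 - d + 1 = d - 4 by ring,
    f4, f5, i6, i5, i4, i3, i2, i1]
  push_cast
  ring
end

section
/- For every integer d ≥ 3, the counts of Proposition 2.2 satisfy the degeneration relation N(d) = N₁(d) + 20·a(d, 2d−5) + 8·a(d−1, 2d−5) + 8·e(d, 2d−5). -/
theorem invfact_step (n : ℤ) : invfact n = ((n : ℚ) + 1) * invfact (n + 1) := by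
  unfold invfact
  rcases lt_trichotomy n (-1) with h | h | h
  · rw [if_neg (by omega), if_neg (by omega)]; simp
  · subst h; simp
  · obtain ⟨k, rfl⟩ := Int.eq_ofNat_of_zero_le (show 0 ≤ n by omega)
    rw [if_pos (by omega), if_pos (by omega)]
    have h1 : ((k : ℤ) + 1).toNat = k + 1 := by omega
    have h2 : (k : ℤ).toNat = k := by omega
    rw [h1, h2, Nat.factorial_succ]
    have h3 : (k : ℚ) + 1 ≠ 0 := by positivity
    have h4 : (k.factorial : ℚ) ≠ 0 := by positivity
    push_cast
    field_simp

theorem zfact_step (n : ℤ) (h : 0 ≤ n) : zfact (n + 1) = ((n : ℚ) + 1) * zfact n := by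
  obtain ⟨k, rfl⟩ := Int.eq_ofNat_of_zero_le h
  unfold zfact
  have h1 : ((k : ℤ) + 1).toNat = k + 1 := by omega
  have h2 : (k : ℤ).toNat = k := by omega
  rw [h1, h2, Nat.factorial_succ]
  push_cast
  ring

/-- the degeneration relation of Proposition 2.2 (3), for every integer `d ≥ 3`:
`N(d) = N₁(d) + 20·a(d, 2d−5) + 8·a(d−1, 2d−5) + 8·e(d, 2d−5)`. -/
theorem N_to_N1_relation (d : ℤ) (hd : 3 ≤ d) :
    Ncount d = N1count d + 20 * aCount d (2 * d - 5) + 8 * aCount (d - 1) (2 * d - 5) +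
      8 * eCount d (2 * d - 5) := by
  have e1 := invfact_step (d - 1)
  have e2 := invfact_step (d - 2)
  have e3 := invfact_step (d - 3)
  have e4 := invfact_step (d - 4)
  have e5 := invfact_step (d - 5)
  have e6 := invfact_step (d - 6)
  have z := zfact_step (2 * d - 5) (by omega)
  rw [show d - 1 + 1 = d by ring] at e1
  rw [show d - 2 + 1 = d - 1 by ring] at e2
  rw [show d - 3 + 1 = d - 2 by ring] at e3
  rw [show d - 4 + 1 = d - 3 by ring] at e4
  rw [show d - 5 + 1 = d - 4 by ring] at e5
  rw [show d - 6 + 1 = d - 5 by ring] at e6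
  rw [show 2 * d - 5 + 1 = 2 * d - 4 by ring] at z
  unfold Ncount N1count aCount eCount
  rw [show 2 * d - 5 - d + 1 = d - 4 by ring, show 2 * d - 5 - (d - 1) + 1 = d - 3 by ring,
    show 2 * d - 5 - d + 2 = d - 3 by ring, show 2 * d - 5 - d - 1 = d - 6 by ring, z]
  generalize zfact (2 * d - 5) = F
  have e3' : invfact (d - 3) = ((d : ℚ) - 2) * ((d : ℚ) - 1) * d * invfact d := by
    rw [e3, e2, e1]; push_cast; ring
  have hY : invfact (d - 2) * invfact (d - 3) = invfact (d - 2) * (((d : ℚ) - 2) * ((d : ℚ) - 1) * d * invfact d) := by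
    rw [e3']
  have e3s : invfact (d - 3) * invfact (d - 3)
      = ((d : ℚ) - 2) * (((d : ℚ) - 2) * ((d : ℚ) - 1) * d * invfact d) * invfact (d - 2) := by
    nth_rewrite 1 [e3]
    rw [e3']; push_cast; ring
  rw [mul_assoc (8 * F) (invfact (d - 3)) (invfact (d - 3)), e3s, e6, e5, e4, e3, e1]
  push_cast
  ring
end
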